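/- Let H be a non-semisimple unimodular Hopf algebra over k of odd index n and ω ∈ k a primitive n-th root of unity. Then for every l ∈ Z_n, Σ_{(a,i) ∈ Z_2 × Z_n} (−1)^a ω^{−i} · dim H^ω_{a,i,l−2i} = 0 in k, where the index l − 2i is computed in Z_n. -/

import Mathlib

open scoped TensorProduct

/-- A group-like element of a coalgebra: a nonzero element `a` with `Δ a = a ⊗ a`. -/
def IsGroupLike (k : Type*) {H : Type*} [CommSemiring k] [AddCommMonoid H] [Module k H]
    [Coalgebra k H] (a : H) : Prop :=
  a ≠ 0 ∧ Coalgebra.comul (R := k) a = a ⊗ₜ[k] a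

/-- The convolution product on the dual of a coalgebra. -/
noncomputable def conv {k H : Type*} [CommSemiring k] [AddCommMonoid H] [Module k H]
    [Coalgebra k H] (f g : Module.Dual k H) : Module.Dual k H :=
  LinearMap.mul' k k ∘ₗ TensorProduct.map f g ∘ₗ Coalgebra.comul

/-- `l ∈ H*` is a right integral of `H*`: `l * β = β(1) • l` for the convolution product. -/
def IsRightIntegralDual (k : Type*) {H : Type*} [CommSemiring k] [Semiring H]
    [HopfAlgebra k H] (l : Module.Dual k H) : Prop :=
  ∀ f : Module.Dual k H, conv l f = f 1 • l

/-- `Λ ∈ H` is a left integral of `H`: `a * Λ = ε(a) • Λ` for all `a`. -/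
def IsLeftIntegral (k : Type*) {H : Type*} [CommSemiring k] [Semiring H]
    [HopfAlgebra k H] (L : H) : Prop :=
  ∀ a : H, a * L = Coalgebra.counit (R := k) a • L

/-- `Λ ∈ H` is a right integral of `H`: `Λ * a = ε(a) • Λ` for all `a`. -/
def IsRightIntegral (k : Type*) {H : Type*} [CommSemiring k] [Semiring H]
    [HopfAlgebra k H] (L : H) : Prop :=
  ∀ a : H, L * a = Coalgebra.counit (R := k) a • L

/-- `g` is the distinguished group-like element of `H`: it is group-like and
`β * λ = β(g) • λ` for some nonzero right integral `λ` of `H*`. -/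
def IsDistinguishedGroupLike (k : Type*) {H : Type*} [CommSemiring k] [Semiring H]
    [HopfAlgebra k H] (g : H) : Prop :=
  IsGroupLike k g ∧ ∃ l : Module.Dual k H, l ≠ 0 ∧ IsRightIntegralDual k l ∧
    ∀ f : Module.Dual k H, conv f l = f g • l

/-- `α` is the distinguished group-like element of `H*`: an algebra map `H → k` with
`Λ * a = α(a) • Λ` for some nonzero left integral `Λ` of `H`. -/
def IsDistinguishedGroupLikeDual (k : Type*) {H : Type*} [CommSemiring k] [Semiring H]
    [HopfAlgebra k H] (α : H →ₐ[k] k) : Prop :=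
  ∃ L : H, L ≠ 0 ∧ IsLeftIntegral k L ∧ ∀ a : H, L * a = α a • L

/-- `IsHopfIndex k g n` : `n` is the index of the Hopf algebra `H` with distinguished
group-like element `g`, i.e. the smallest positive integer `n` with `S ^ (4 n) = id` and
`g ^ n = 1`, where `S` is the antipode. -/
def IsHopfIndex (k : Type*) {H : Type*} [CommSemiring k] [Semiring H] [HopfAlgebra k H]
    (g : H) (n : ℕ) : Prop :=
  0 < n ∧ (HopfAlgebra.antipode (R := k) (A := H) : Module.End k H) ^ (4 * n) = 1 ∧ g ^ n = 1 ∧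
    ∀ m : ℕ, 0 < m → (HopfAlgebra.antipode (R := k) (A := H) : Module.End k H) ^ (4 * m) = 1 →
      g ^ m = 1 → n ≤ m

/-- The simultaneous eigenspace `H^ω_{a,i,j} = {u ∈ H | S² u = (-1)^a ω^i • u, u * g = ω^j • u}`
for `(a,i,j) ∈ ℤ/2 × ℤ/n × ℤ/n`. -/
noncomputable def hopfEigenspace {k H : Type*} [CommRing k] [Ring H] [HopfAlgebra k H]
    (g : H) (ω : k) {n : ℕ} (t : ZMod 2 × ZMod n × ZMod n) : Submodule k H :=
  Module.End.eigenspace ((HopfAlgebra.antipode (R := k) (A := H) : Module.End k H) ^ 2)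
      ((-1 : k) ^ t.1.val * ω ^ t.2.1.val) ⊓
    Module.End.eigenspace (LinearMap.mulRight k g : Module.End k H) (ω ^ t.2.2.val)

/-- Convolution powers of an element of the dual; the zeroth power is the counit,
the unit of the convolution algebra. -/
noncomputable def convPow {k H : Type*} [CommSemiring k] [AddCommMonoid H] [Module k H]
    [Coalgebra k H] (f : Module.Dual k H) : ℕ → Module.Dual k H
  | 0 => Coalgebra.counit
  | m + 1 => conv f (convPow f m)

/-! Let `lam` be a nonzero right integral of `H*`, `Λ` a two-sided integral of `H`. The dual basis
of the Frobenius form `lam (x * y)` is read off from `Δ(Λ)`, which gives the trace formula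
`lam(Λ) tr(x ↦ a S⁻²(x)) = ε(Λ) lam(a)`. By Maschke's theorem `ε(Λ) = 0` when `H` is not
semisimple, so `x ↦ a S⁻²(x)` has trace zero for every `a`; take for `a` the idempotent
`e = (1 / n) ∑ (ω ^ (-l) g) ^ t` of `k⟨g⟩`. Since `S²` fixes `e`, this trace is the sum of `μ⁻¹`
times the dimension of the `μ`-eigenspace of `S²` on `e H = {u | g u = ω ^ l u}`, over the `2n`-th
roots of unity `μ = (-1) ^ a ω ^ i`. Radford's formula `S⁴(x) g = g x` identifies this eigenspace
with `H^ω_{a,i,l-2i}`. -/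

open Coalgebra HopfAlgebra WithConv

section AntipodeIdentities

variable {R A H ι : Type*} [CommSemiring R] [Semiring A] [Algebra R A] [Semiring H]
  [HopfAlgebra R H]

lemma toConv_algHom_mul_comp_antipode (f : H →ₐ[R] A) :
    toConv f.toLinearMap * toConv (f.toLinearMap ∘ₗ antipode R) = 1 := by
  ext x
  rw [(ℛ R x).convMul_apply]
  simp [← map_mul, ← map_sum, sum_mul_antipode_eq_algebraMap_counit]

lemma toConv_comp_antipode_mul_algHom (f : H →ₐ[R] A) :
    toConv (f.toLinearMap ∘ₗ antipode R) * toConv f.toLinearMap = 1 := by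
  ext x
  rw [(ℛ R x).convMul_apply]
  simp [← map_mul, ← map_sum, sum_antipode_mul_eq_algebraMap_counit]

open Algebra.TensorProduct in
lemma toConv_comul_eq_includeLeft_mul_includeRight :
    toConv (comul (R := R) (A := H)) =
      toConv (includeLeft : H →ₐ[R] H ⊗[R] H).toLinearMap *
        toConv (includeRight : H →ₐ[R] H ⊗[R] H).toLinearMap := by
  ext x
  rw [(ℛ R x).convMul_apply]
  simp [(ℛ R x).eq]

lemma sum_comul_mul_one_tmul_antipode {x : H} (r : Repr R x ι) :
    ∑ i ∈ r.index, comul (R := R) (r.left i) * 1 ⊗ₜ antipode R (r.right i) = x ⊗ₜ[R] 1 := by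
  have h := congr($(toConv_comul_eq_includeLeft_mul_includeRight (R := R) (H := H)) *
    toConv (Algebra.TensorProduct.includeRight.toLinearMap ∘ₗ antipode R))
  rw [mul_assoc, toConv_algHom_mul_comp_antipode, mul_one] at h
  simpa [r.convMul_apply] using congr($h x)

lemma sum_antipode_tmul_one_mul_comul {x : H} (r : Repr R x ι) :
    ∑ i ∈ r.index, antipode R (r.left i) ⊗ₜ 1 * comul (R := R) (r.right i) = 1 ⊗ₜ[R] x := by
  have h := congr(toConv (Algebra.TensorProduct.includeLeft.toLinearMap ∘ₗ antipode R) *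
    $(toConv_comul_eq_includeLeft_mul_includeRight (R := R) (H := H)))
  rw [← mul_assoc, toConv_comp_antipode_mul_algHom, one_mul] at h
  simpa [r.convMul_apply] using congr($h x)

lemma sum_antipodeInv_right_mul_left {T : Module.End R H} (hST : antipode R * T = 1)
    (hTS : T * antipode R = 1) {x : H} (r : Repr R x ι) :
    ∑ i ∈ r.index, T (r.right i) * r.left i = counit (R := R) x • 1 := by
  have hinj : Function.Injective (antipode R (A := H)) :=
    Function.LeftInverse.injective (g := T) (LinearMap.congr_fun hTS)
  apply hinj
  have hr : ∀ y, antipode R (T y) = y := LinearMap.congr_fun hST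
  simpa [antipode_mul_antidistrib, hr] using sum_antipode_mul_eq_smul r

end AntipodeIdentities

section Contractions

variable {R M : Type*} [CommSemiring R] [AddCommMonoid M] [Module R M]

/-- The contraction `a ⊗ b ↦ l a • b` of the first tensor factor against a functional `l`. -/
noncomputable def contractFst (l : Module.Dual R M) : M ⊗[R] M →ₗ[R] M :=
  (TensorProduct.lid R M).toLinearMap ∘ₗ l.rTensor M

/-- The contraction `a ⊗ b ↦ l b • a` of the second tensor factor against a functional `l`. -/
noncomputable def contractSnd (l : Module.Dual R M) : M ⊗[R] M →ₗ[R] M :=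
  (TensorProduct.rid R M).toLinearMap ∘ₗ l.lTensor M

@[simp]
lemma contractFst_tmul (l : Module.Dual R M) (a b : M) : contractFst l (a ⊗ₜ b) = l a • b := by
  simp [contractFst]

@[simp]
lemma contractSnd_tmul (l : Module.Dual R M) (a b : M) : contractSnd l (a ⊗ₜ b) = l b • a := by
  simp [contractSnd]

lemma sum_counit_right_smul [Coalgebra R M] {ι : Type*} {x : M} (r : Repr R x ι) :
    ∑ i ∈ r.index, counit (R := R) (r.right i) • r.left i = x := by
  simpa only [map_sum, TensorProduct.rid_tmul, one_smul] using
    congr(TensorProduct.rid R M $(sum_tmul_counit_eq r))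

lemma dual_contractFst_comul [Coalgebra R M] (l f : Module.Dual R M) (x : M) :
    f (contractFst l (comul x)) = conv l f x := by
  simp [conv, ← (ℛ R x).eq]

lemma dual_contractSnd_comul [Coalgebra R M] (l f : Module.Dual R M) (x : M) :
    f (contractSnd l (comul x)) = conv f l x := by
  simp [conv, ← (ℛ R x).eq, mul_comm]

variable {A : Type*} [Semiring A] [Algebra R A]

lemma contractFst_mul_one_tmul (l : Module.Dual R A) (z : A ⊗[R] A) (a : A) :
    contractFst l (z * 1 ⊗ₜ a) = contractFst l z * a := by
  induction z with
  | zero => simp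
  | tmul b c => simp
  | add z w hz hw => simp [add_mul, hz, hw]

lemma contractSnd_tmul_one_mul (l : Module.Dual R A) (z : A ⊗[R] A) (a : A) :
    contractSnd l (a ⊗ₜ 1 * z) = a * contractSnd l z := by
  induction z with
  | zero => simp
  | tmul b c => simp
  | add z w hz hw => simp [mul_add, hz, hw]

end Contractions

section DualIntegrals

variable {k H ι κ : Type*} [Field k] [Ring H] [HopfAlgebra k H] {l : Module.Dual k H} {g : H}

lemma contractFst_comul_of_isRightIntegralDual (hl : IsRightIntegralDual k l) (x : H) :
    contractFst l (comul x) = l x • 1 := by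
  rw [← sub_eq_zero, ← Module.forall_dual_apply_eq_zero_iff k]
  intro f
  simp [dual_contractFst_comul, hl f, mul_comm]

lemma contractSnd_comul_of_conv_eq_smul (hlg : ∀ f : Module.Dual k H, conv f l = f g • l) (x : H) :
    contractSnd l (comul x) = l x • g := by
  rw [← sub_eq_zero, ← Module.forall_dual_apply_eq_zero_iff k]
  intro f
  simp [dual_contractSnd_comul, hlg f, mul_comm]

lemma sum_dual_left_mul_smul_right (hl : IsRightIntegralDual k l) {x y : H} (r : Repr k x ι)
    (s : Repr k y κ) :
    ∑ i ∈ r.index, l (r.left i * y) • r.right i =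
      ∑ j ∈ s.index, l (x * s.left j) • antipode k (s.right j) := by
  calc ∑ i ∈ r.index, l (r.left i * y) • r.right i
      = contractFst l (comul x * y ⊗ₜ 1) := by simp [← r.eq, Finset.sum_mul]
    _ = ∑ j ∈ s.index, contractFst l (comul (x * s.left j) * 1 ⊗ₜ antipode k (s.right j)) := by
      rw [← sum_comul_mul_one_tmul_antipode s, Finset.mul_sum, map_sum]
      simp only [Bialgebra.comul_mul, mul_assoc]
    _ = ∑ j ∈ s.index, l (x * s.left j) • antipode k (s.right j) := by
      simp only [contractFst_mul_one_tmul, contractFst_comul_of_isRightIntegralDual hl,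
        smul_one_mul]

lemma sum_dual_mul_right_smul_left (hlg : ∀ f : Module.Dual k H, conv f l = f g • l) {x y : H}
    (r : Repr k x ι) (s : Repr k y κ) :
    ∑ j ∈ s.index, l (x * s.right j) • s.left j =
      ∑ i ∈ r.index, l (r.right i * y) • (antipode k (r.left i) * g) := by
  calc ∑ j ∈ s.index, l (x * s.right j) • s.left j
      = contractSnd l (1 ⊗ₜ x * comul y) := by simp [← s.eq, Finset.mul_sum]
    _ = ∑ i ∈ r.index, contractSnd l (antipode k (r.left i) ⊗ₜ 1 * comul (r.right i * y)) := by
      rw [← sum_antipode_tmul_one_mul_comul r, Finset.sum_mul, map_sum]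
      simp only [Bialgebra.comul_mul, mul_assoc]
    _ = ∑ i ∈ r.index, l (r.right i * y) • (antipode k (r.left i) * g) := by
      simp only [contractSnd_tmul_one_mul, contractSnd_comul_of_conv_eq_smul hlg, mul_smul_comm]

lemma exists_repr_dual_left_mul_eq_zero (hl : IsRightIntegralDual k l) {x : H}
    (hx : ∀ y, l (x * y) = 0) :
    ∃ r : Repr k x (Module.Free.ChooseBasisIndex k H), ∀ i y, l (r.left i * y) = 0 := by
  classical
  let b := Module.Free.chooseBasis k H
  obtain ⟨a, ha⟩ := TensorProduct.eq_repr_basis_right b (comul (R := k) x)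
  let r : Repr k x (Module.Free.ChooseBasisIndex k H) := ⟨a.support, a, b, ha⟩
  refine ⟨r, fun i y => ?_⟩
  have h : ∑ i ∈ a.support, l (a i * y) • b i = 0 := by
    simpa [hx] using sum_dual_left_mul_smul_right hl r (ℛ k y)
  by_cases hi : i ∈ a.support
  · exact linearIndependent_iff'.1 b.linearIndependent a.support _ h i hi
  · simp [r, Finsupp.notMem_support_iff.1 hi]

lemma counit_eq_zero_of_forall_dual_mul_eq_zero (hl0 : l ≠ 0) (hl : IsRightIntegralDual k l)
    {x : H} (hx : ∀ y, l (x * y) = 0) : counit (R := k) x = 0 := by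
  obtain ⟨r, hr⟩ := exists_repr_dual_left_mul_eq_zero hl hx
  obtain ⟨z, hz⟩ := DFunLike.ne_iff.1 hl0
  have h : l ((counit (R := k) x • 1) * z) = 0 := by
    simp [← sum_mul_antipode_eq_smul r, Finset.sum_mul, mul_assoc, hr]
  exact (by simpa using h : counit (R := k) x = 0 ∨ l z = 0).resolve_right hz

lemma eq_zero_of_forall_dual_mul_eq_zero (hl0 : l ≠ 0) (hl : IsRightIntegralDual k l) {x : H}
    (hx : ∀ y, l (x * y) = 0) : x = 0 := by
  obtain ⟨r, hr⟩ := exists_repr_dual_left_mul_eq_zero hl hx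
  rw [← sum_counit_smul r]
  exact Finset.sum_eq_zero fun i _ => by
    rw [counit_eq_zero_of_forall_dual_mul_eq_zero hl0 hl (hr i), zero_smul]

lemma dual_integral_apply_ne_zero (hl0 : l ≠ 0) (hl : IsRightIntegralDual k l) {L : H}
    (hL0 : L ≠ 0) (hL : IsRightIntegral k L) : l L ≠ 0 :=
  fun h => hL0 <| eq_zero_of_forall_dual_mul_eq_zero hl0 hl fun y => by simp [hL y, h]

lemma sum_dual_mul_left_smul_antipode_right (hl : IsRightIntegralDual k l) {L : H}
    (hL : IsLeftIntegral k L) (r : Repr k L ι) (x : H) :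
    ∑ i ∈ r.index, l (x * r.left i) • antipode k (r.right i) = l L • x := by
  rw [← sum_dual_left_mul_smul_right hl (ℛ k x) r]
  simp [hL _, mul_comm _ (l L), mul_smul, ← Finset.smul_sum, sum_counit_smul]

lemma sum_dual_left_mul_smul_right_eq_antipode (hl : IsRightIntegralDual k l) {L : H}
    (hL : IsRightIntegral k L) (r : Repr k L ι) (x : H) :
    ∑ i ∈ r.index, l (r.left i * x) • r.right i = l L • antipode k x := by
  rw [sum_dual_left_mul_smul_right hl r (ℛ k x)]
  conv_rhs => rw [← sum_counit_smul (ℛ k x)]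
  simp [hL _, Finset.smul_sum, smul_smul, mul_comm]

lemma sum_dual_mul_right_smul_left_eq_antipode_mul
    (hlg : ∀ f : Module.Dual k H, conv f l = f g • l) {L : H} (hL : IsLeftIntegral k L)
    (r : Repr k L ι) (x : H) :
    ∑ i ∈ r.index, l (x * r.right i) • r.left i = l L • (antipode k x * g) := by
  rw [sum_dual_mul_right_smul_left hlg (ℛ k x) r]
  conv_rhs => rw [← sum_counit_right_smul (ℛ k x)]
  simp [hL _, Finset.smul_sum, Finset.sum_mul, smul_smul, mul_comm]

lemma sum_dual_right_mul_smul_antipode_left_mul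
    (hlg : ∀ f : Module.Dual k H, conv f l = f g • l) {L : H} (hL : IsRightIntegral k L)
    (r : Repr k L ι) (x : H) :
    ∑ i ∈ r.index, l (r.right i * x) • (antipode k (r.left i) * g) = l L • x := by
  rw [← sum_dual_mul_right_smul_left hlg r (ℛ k x)]
  simp [hL _, mul_comm _ (l L), mul_smul, ← Finset.smul_sum, sum_counit_right_smul]

lemma finiteDimensional_of_dual_integral_apply_ne_zero (hl : IsRightIntegralDual k l) {L : H}
    (hL : IsLeftIntegral k L) (hlL : l L ≠ 0) : FiniteDimensional k H := by
  refine ⟨Submodule.fg_def.2 ⟨(fun i => antipode k ((ℛ k L).right i)) '' (ℛ k L).index,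
    (Finset.finite_toSet _).image _, eq_top_iff.2 fun x _ => ?_⟩⟩
  rw [← inv_smul_smul₀ hlL x, ← sum_dual_mul_left_smul_antipode_right hl hL (ℛ k L) x]
  exact Submodule.smul_mem _ _ <| Submodule.sum_mem _ fun i hi =>
    Submodule.smul_mem _ _ <| Submodule.subset_span <| Set.mem_image_of_mem _ hi

lemma antipode_surjective_of_dual_integral_apply_ne_zero (hl : IsRightIntegralDual k l) {L : H}
    (hL : IsLeftIntegral k L) (hlL : l L ≠ 0) : Function.Surjective (antipode k (A := H)) := by
  intro x
  use (l L)⁻¹ • ∑ i ∈ (ℛ k L).index, l (x * (ℛ k L).left i) • (ℛ k L).right i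
  simp only [map_smul, map_sum, sum_dual_mul_left_smul_antipode_right hl hL, inv_smul_smul₀ hlL]

lemma dual_antipode_mul_mul (hl : IsRightIntegralDual k l)
    (hlg : ∀ f : Module.Dual k H, conv f l = f g • l) {L : H} (hL : IsLeftIntegral k L)
    (hL' : IsRightIntegral k L) (hlL : l L ≠ 0) (x y : H) :
    l (antipode k x * g * y) = l (x * antipode k y) := by
  apply mul_left_cancel₀ hlL
  calc l L * l (antipode k x * g * y)
      = l ((l L • (antipode k x * g)) * y) := by simp
    _ = ∑ i ∈ (ℛ k L).index, l (x * (ℛ k L).right i) * l ((ℛ k L).left i * y) := by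
      simp [← sum_dual_mul_right_smul_left_eq_antipode_mul hlg hL (ℛ k L), Finset.sum_mul]
    _ = l (x * (l L • antipode k y)) := by
      simp [← sum_dual_left_mul_smul_right_eq_antipode hl hL' (ℛ k L), Finset.mul_sum, mul_comm]
    _ = l L * l (x * antipode k y) := by simp

lemma dual_integral_mul_comm (hg : IsGroupLikeElem k g) (hl : IsRightIntegralDual k l)
    (hlg : ∀ f : Module.Dual k H, conv f l = f g • l) {L : H} (hL : IsLeftIntegral k L)
    (hL' : IsRightIntegral k L) (hlL : l L ≠ 0) (x y : H) :
    l (x * y) = l (antipode k (antipode k y) * x) := by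
  obtain ⟨w, hw⟩ :=
    antipode_surjective_of_dual_integral_apply_ne_zero hl hL hlL (x * antipode k g)
  have hx : x = antipode k w * g := by rw [hw, mul_assoc, hg.antipode_mul_cancel, mul_one]
  have h := dual_antipode_mul_mul hl hlg hL hL' hlL
  calc l (x * y) = l (w * antipode k y) := by rw [hx, h]
    _ = l (antipode k (w * antipode k y) * g * 1) := by rw [h, antipode_one, mul_one]
    _ = l (antipode k (antipode k y) * x) := by
      rw [mul_one, antipode_mul_antidistrib, mul_assoc, ← hx]

lemma antipode_pow_four_mul (hg : IsGroupLikeElem k g) (hl : IsRightIntegralDual k l)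
    (hlg : ∀ f : Module.Dual k H, conv f l = f g • l) {L : H} (hL : IsLeftIntegral k L)
    (hL' : IsRightIntegral k L) (hlL : l L ≠ 0) (x : H) :
    ((antipode k : Module.End k H) ^ 4) x * g = g * x := by
  have h : l L • x = l L • (antipode k g * ((antipode k : Module.End k H) ^ 4) x * g) := by
    calc l L • x
        = ∑ i ∈ (ℛ k L).index,
            l ((ℛ k L).right i * x) • (antipode k ((ℛ k L).left i) * g) :=
          (sum_dual_right_mul_smul_antipode_left_mul hlg hL' (ℛ k L) x).symm
      _ = antipode k (∑ i ∈ (ℛ k L).index,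
            l (antipode k (antipode k x) * (ℛ k L).right i) • (ℛ k L).left i) * g := by
          simp [Finset.sum_mul, dual_integral_mul_comm hg hl hlg hL hL' hlL _ x]
      _ = l L • (antipode k g * ((antipode k : Module.End k H) ^ 4) x * g) := by
          rw [sum_dual_mul_right_smul_left_eq_antipode_mul hlg hL]
          simp [antipode_mul_antidistrib, pow_succ, Module.End.mul_apply]
  nth_rw 2 [smul_right_injective H hlL h]
  simp only [← mul_assoc, hg.mul_antipode_cancel, one_mul]

lemma trace_mulLeft_mul_antipodeInv_sq [FiniteDimensional k H] (hl : IsRightIntegralDual k l)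
    {L : H} (hL : IsLeftIntegral k L) {T : Module.End k H} (hTS : T * antipode k = 1) (a : H) :
    l L * LinearMap.trace k H (LinearMap.mulLeft k a * T ^ 2) = counit (R := k) L * l a := by
  have hrank_one : l L • (LinearMap.mulLeft k a * T ^ 2) = ∑ i ∈ (ℛ k L).index,
      (l ∘ₗ LinearMap.mulRight k ((ℛ k L).left i)).smulRight (a * T ((ℛ k L).right i)) := by
    ext x
    have hTS' : ∀ y, T (antipode k y) = y := LinearMap.congr_fun hTS
    simpa [hTS', Finset.mul_sum, pow_two] using
      congr(a * T (T $((sum_dual_mul_left_smul_antipode_right hl hL (ℛ k L) x).symm)))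
  calc l L * LinearMap.trace k H (LinearMap.mulLeft k a * T ^ 2)
      = ∑ i ∈ (ℛ k L).index, l (a * T ((ℛ k L).right i) * (ℛ k L).left i) := by
        rw [← smul_eq_mul, ← map_smul, hrank_one]
        simp [LinearMap.trace_smulRight]
    _ = l (a * ∑ i ∈ (ℛ k L).index, T ((ℛ k L).right i) * (ℛ k L).left i) := by
        simp only [Finset.mul_sum, map_sum, mul_assoc]
    _ = counit (R := k) L * l a := by
        simp [sum_antipodeInv_right_mul_left (mul_eq_one_comm.1 hTS) hTS]

end DualIntegrals

section Maschke

section CommSemiring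

variable {R H : Type*} [CommSemiring R] [Semiring H] [HopfAlgebra R H] {L : H}

lemma comul_mul_tmul_one_of_isRightIntegral (hL : IsRightIntegral R L) (h : H) :
    comul L * h ⊗ₜ[R] 1 = comul L * 1 ⊗ₜ antipode R h := by
  rw [← sum_comul_mul_one_tmul_antipode (ℛ R h), Finset.mul_sum]
  conv_rhs => rw [← sum_counit_smul (ℛ R h)]
  simp [← mul_assoc, ← Bialgebra.comul_mul, hL _, TensorProduct.tmul_sum, Finset.mul_sum]

variable {M : Type*} [AddCommMonoid M] [Module R M] [Module H M] [IsScalarTower R H M]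

/-- The `R`-linear map sending `a ⊗ b` to the endomorphism `m ↦ S(a) • f (b • m)` of `M`. Its value
at `Δ(Λ)`, for an integral `Λ`, is the average of `f` that makes it `H`-linear. -/
noncomputable def antipodeConj (f : Module.End R M) : H ⊗[R] H →ₗ[R] Module.End R M :=
  LinearMap.mul' R (Module.End R M) ∘ₗ TensorProduct.map
    (LinearMap.mulRight R f ∘ₗ (Algebra.lsmul R R M).toLinearMap ∘ₗ antipode R)
    (Algebra.lsmul R R M).toLinearMap

@[simp]
lemma antipodeConj_tmul_apply (f : Module.End R M) (a b : H) (m : M) :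
    antipodeConj f (a ⊗ₜ b) m = antipode R a • f (b • m) := by
  simp [antipodeConj]

lemma antipodeConj_mul_tmul_one_apply (f : Module.End R M) (z : H ⊗[R] H) (h : H) (m : M) :
    antipodeConj f (z * h ⊗ₜ 1) m = antipode R h • antipodeConj f z m := by
  induction z with
  | zero => simp
  | tmul a b => simp [antipode_mul_antidistrib, mul_smul]
  | add z w hz hw => simp [add_mul, hz, hw]

lemma antipodeConj_mul_one_tmul_apply (f : Module.End R M) (z : H ⊗[R] H) (h : H) (m : M) :
    antipodeConj f (z * 1 ⊗ₜ h) m = antipodeConj f z (h • m) := by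
  induction z with
  | zero => simp
  | tmul a b => simp [mul_smul]
  | add z w hz hw => simp [add_mul, hz, hw]

lemma antipodeConj_comul_apply_smul (hL : IsRightIntegral R L)
    (hS : Function.Surjective (antipode R (A := H))) (f : Module.End R M) (h : H) (m : M) :
    antipodeConj f (comul L) (h • m) = h • antipodeConj f (comul L) m := by
  obtain ⟨h, rfl⟩ := hS h
  rw [← antipodeConj_mul_one_tmul_apply, ← comul_mul_tmul_one_of_isRightIntegral hL,
    antipodeConj_mul_tmul_one_apply]

lemma antipodeConj_comul_apply (f : Module.End R M) (m : M) :
    antipodeConj f (comul L) m =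
      ∑ i ∈ (ℛ R L).index, antipode R ((ℛ R L).left i) • f ((ℛ R L).right i • m) := by
  conv_lhs => rw [← (ℛ R L).eq]
  simp

end CommSemiring

variable {k H M : Type*} [Field k] [Ring H] [HopfAlgebra k H] {L : H} [AddCommGroup M] [Module k M]
  [Module H M] [IsScalarTower k H M]

lemma isProj_smul_antipodeConj_comul (hεL : counit (R := k) L ≠ 0) {N : Submodule H M}
    {f : Module.End k M} (hf : LinearMap.IsProj (N.restrictScalars k) f) :
    LinearMap.IsProj (N.restrictScalars k)
      ((counit (R := k) L)⁻¹ • antipodeConj f (comul L)) := by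
  constructor
  · intro m
    rw [LinearMap.smul_apply, antipodeConj_comul_apply]
    exact Submodule.smul_mem _ _ <| sum_mem fun i _ => N.smul_mem _ (hf.map_mem _)
  · intro m hm
    have hfix : ∀ h : H, f (h • m) = h • m := fun h => hf.map_id _ (N.smul_mem h hm)
    simp [antipodeConj_comul_apply, hfix, smul_smul, ← Finset.sum_smul, sum_antipode_mul_eq_smul,
      hεL]

variable (M) in
lemma isSemisimpleModule_of_counit_ne_zero (hL : IsRightIntegral k L)
    (hεL : counit (R := k) L ≠ 0) (hS : Function.Surjective (antipode k (A := H))) :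
    IsSemisimpleModule H M := by
  refine isSemisimpleModule_iff _ _ |>.2 ⟨fun N => ?_⟩
  obtain ⟨p, hp⟩ := (N.restrictScalars k).subtype.exists_leftInverse_of_injective
    (Submodule.ker_subtype _)
  have hproj : LinearMap.IsProj (N.restrictScalars k) ((N.restrictScalars k).subtype ∘ₗ p) :=
    ⟨fun m => (p m).2, fun m hm => congr(($hp ⟨m, hm⟩ : M))⟩
  have hP := isProj_smul_antipodeConj_comul hεL hproj
  let P : M →ₗ[H] M :=
    { (counit (R := k) L)⁻¹ • antipodeConj ((N.restrictScalars k).subtype ∘ₗ p) (comul L) with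
      map_smul' := fun h m => by
        simp [antipodeConj_comul_apply_smul hL hS, smul_algebra_smul_comm] }
  exact ⟨_, LinearMap.IsProj.isCompl (f := P) ⟨hP.map_mem, hP.map_id⟩⟩

end Maschke

section EigenspaceTrace

open Polynomial

variable {K V : Type*} [Field K] [AddCommGroup V] [Module K V] {f : Module.End K V}

open Classical in
lemma isProj_aeval_lagrangeBasis {s : Finset K} (hf : aeval f (Lagrange.nodal s id) = 0) {μ : K}
    (hμ : μ ∈ s) : LinearMap.IsProj (f.eigenspace μ) (aeval f (Lagrange.basis s id μ)) := by
  constructor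
  · intro v
    rw [Module.End.mem_eigenspace_iff, ← sub_eq_zero]
    have h : (X - C μ) * Lagrange.basis s id μ =
        C (Lagrange.nodalWeight s id μ) * Lagrange.nodal s id := by
      rw [Lagrange.basis_eq_prod_sub_inv_mul_nodal_div hμ, ← Lagrange.nodal_erase_eq_nodal_div hμ,
        mul_left_comm, Lagrange.nodal_eq_mul_nodal_erase hμ, id]
    simpa [hf, Module.algebraMap_end_apply] using congr(aeval f $h v)
  · intro v hv
    rw [Module.End.aeval_apply_of_mem_apply_eq_smul (Module.End.mem_eigenspace_iff.1 hv)]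
    have h := Lagrange.eval_basis_self (v := id) Function.injective_id.injOn hμ
    rw [id] at h
    rw [h, one_smul]

lemma trace_eq_sum_mul_finrank_eigenspace [FiniteDimensional K V] {s : Finset K}
    (hs : s.Nonempty) (hf : aeval f (Lagrange.nodal s id) = 0) :
    LinearMap.trace K V f = ∑ μ ∈ s, μ * (Module.finrank K (f.eigenspace μ) : K) := by
  classical
  have hproj := fun μ (hμ : μ ∈ s) => isProj_aeval_lagrangeBasis hf hμ
  have hdecomp : f = ∑ μ ∈ s, μ • aeval f (Lagrange.basis s id μ) := by
    calc f = f * aeval f (∑ μ ∈ s, Lagrange.basis s id μ) := by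
          rw [Lagrange.sum_basis Function.injective_id.injOn hs, map_one, mul_one]
      _ = ∑ μ ∈ s, μ • aeval f (Lagrange.basis s id μ) := by
          rw [map_sum, Finset.mul_sum]
          refine Finset.sum_congr rfl fun μ hμ => LinearMap.ext fun v => ?_
          exact Module.End.mem_eigenspace_iff.1 ((hproj μ hμ).map_mem v)
  conv_lhs => rw [hdecomp, map_sum]
  refine Finset.sum_congr rfl fun μ hμ => ?_
  rw [map_smul, (hproj μ hμ).trace, smul_eq_mul]

lemma trace_eq_sum_nthRootsFinset_mul_finrank_eigenspace [FiniteDimensional K V] {N : ℕ}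
    [NeZero N] {ζ : K} (hζ : IsPrimitiveRoot ζ N) (hf : f ^ (N + 1) = f) :
    LinearMap.trace K V f =
      ∑ μ ∈ nthRootsFinset N (1 : K), μ * (Module.finrank K (f.eigenspace μ) : K) := by
  classical
  have h0 : (0 : K) ∉ nthRootsFinset N (1 : K) := by
    simp [mem_nthRootsFinset (NeZero.pos N), NeZero.ne N]
  have hnodal : Lagrange.nodal (insert 0 (nthRootsFinset N (1 : K))) id = X ^ (N + 1) - X := by
    rw [Lagrange.nodal_insert_eq_nodal h0, Lagrange.nodal_eq]
    simp only [id, ← X_pow_sub_one_eq_prod (NeZero.pos N) hζ, map_zero, sub_zero]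
    ring
  have haeval : aeval f (Lagrange.nodal (insert 0 (nthRootsFinset N (1 : K))) id) = 0 := by
    simp [hnodal, hf]
  rw [trace_eq_sum_mul_finrank_eigenspace (Finset.insert_nonempty 0 _) haeval,
    Finset.sum_insert h0, zero_mul, zero_add]

lemma eigenspace_mul_inv_of_isIdempotentElem {P σ τ : Module.End K V} (hP : IsIdempotentElem P)
    (hPτ : Commute P τ) (hστ : σ * τ = 1) (hτσ : τ * σ = 1) {μ : K} (hμ : μ ≠ 0) :
    (P * τ).eigenspace μ⁻¹ = σ.eigenspace μ ⊓ P.eigenspace 1 := by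
  have hστ' : ∀ v, σ (τ v) = v := LinearMap.congr_fun hστ
  have hτσ' : ∀ v, τ (σ v) = v := LinearMap.congr_fun hτσ
  ext v
  simp only [Submodule.mem_inf, Module.End.mem_eigenspace_iff, Module.End.mul_apply, one_smul]
  constructor
  · intro h
    have hPv : P v = v := by
      rw [← smul_inv_smul₀ hμ v, ← h, map_smul, ← Module.End.mul_apply P P, hP.eq]
    have hτv : τ v = μ⁻¹ • v := by
      rw [← h, ← Module.End.mul_apply, hPτ.eq, Module.End.mul_apply, hPv]
    refine ⟨?_, hPv⟩
    rw [← inv_smul_eq_iff₀ hμ, ← map_smul, ← hτv, hστ']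
  · rintro ⟨hσv, hPv⟩
    rw [← Module.End.mul_apply, hPτ.eq, Module.End.mul_apply, hPv, eq_inv_smul_iff₀ hμ,
      ← map_smul, ← hσv, hτσ']

lemma trace_mul_pow_pred_of_isIdempotentElem [FiniteDimensional K V] {N : ℕ} [NeZero N] {ζ : K}
    (hζ : IsPrimitiveRoot ζ N) {P σ : Module.End K V} (hP : IsIdempotentElem P)
    (hPσ : Commute P σ) (hσ : σ ^ N = 1) :
    LinearMap.trace K V (P * σ ^ (N - 1)) = ∑ μ ∈ nthRootsFinset N (1 : K),
      μ⁻¹ * (Module.finrank K (σ.eigenspace μ ⊓ P.eigenspace 1 : Submodule K V) : K) := by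
  have hσ' : σ * σ ^ (N - 1) = 1 := by rw [mul_pow_sub_one (NeZero.ne N), hσ]
  have hpow : (P * σ ^ (N - 1)) ^ (N + 1) = P * σ ^ (N - 1) := by
    rw [(hPσ.pow_right _).mul_pow, hP.pow_succ_eq, pow_succ, pow_right_comm, hσ, one_pow, one_mul]
  have hN := NeZero.pos N
  rw [trace_eq_sum_nthRootsFinset_mul_finrank_eigenspace hζ hpow]
  refine Finset.sum_nbij' (·⁻¹) (·⁻¹) ?_ ?_ (fun _ _ => inv_inv _) (fun _ _ => inv_inv _)
    fun μ hμ => ?_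
  · simp [mem_nthRootsFinset hN]
  · simp [mem_nthRootsFinset hN]
  · have hμ0 : μ ≠ 0 := ne_zero_of_mem_nthRootsFinset one_ne_zero hμ
    rw [← eigenspace_mul_inv_of_isIdempotentElem hP (hPσ.pow_right _) hσ'
      (mul_eq_one_comm.1 hσ') (inv_ne_zero hμ0), inv_inv]

end EigenspaceTrace

section RootsOfUnity

open Polynomial

variable {K : Type*} [CommRing K] {n : ℕ} {ω : K}

lemma isPrimitiveRoot_neg_of_odd [NeZero (2 : K)] (hn : Odd n) (hω : IsPrimitiveRoot ω n) :
    IsPrimitiveRoot (-ω) (2 * n) := by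
  have hne : (-1 : K) ≠ 1 := fun h => two_ne_zero (α := K) (by linear_combination -h)
  have h2 : orderOf (-1 : K) = 2 := orderOf_eq_prime neg_one_sq hne
  rw [hω.eq_orderOf] at hn ⊢
  rw [neg_eq_neg_one_mul, ← h2, ← (Commute.all (-1) ω).orderOf_mul_eq_mul_orderOf_of_coprime]
  · exact .orderOf _
  · rw [h2]; exact Nat.coprime_two_left.2 hn

variable [IsDomain K]

lemma injective_neg_one_pow_mul_pow [NeZero (2 : K)] [NeZero n] (hn : Odd n)
    (hω : IsPrimitiveRoot ω n) :
    Function.Injective fun t : ZMod 2 × ZMod n => (-1 : K) ^ t.1.val * ω ^ t.2.val := by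
  rintro ⟨a, i⟩ ⟨b, j⟩ h
  have hpow (a : ZMod 2) (i : ZMod n) : ((-1 : K) ^ a.val * ω ^ i.val) ^ n = (-1) ^ a.val := by
    rw [mul_pow, pow_right_comm, hn.neg_one_pow, pow_right_comm, hω.pow_eq_one, one_pow, mul_one]
  have hab : (-1 : K) ^ a.val = (-1) ^ b.val := by
    rw [← hpow a i, ← hpow b j]
    exact congr($h ^ n)
  have hij : ω ^ i.val = ω ^ j.val :=
    mul_left_cancel₀ (pow_ne_zero a.val (neg_ne_zero.2 one_ne_zero)) (h.trans (by rw [hab]))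
  have h2 : IsPrimitiveRoot (-1 : K) 2 := by
    simpa using isPrimitiveRoot_neg_of_odd odd_one (IsPrimitiveRoot.one (M := K))
  exact Prod.ext (ZMod.val_injective 2 (h2.pow_inj a.val_lt b.val_lt hab))
    (ZMod.val_injective n (hω.pow_inj i.val_lt j.val_lt hij))

lemma sum_nthRootsFinset_two_mul [NeZero (2 : K)] [NeZero n] (hn : Odd n)
    (hω : IsPrimitiveRoot ω n) {M : Type*} [AddCommMonoid M] (F : K → M) :
    ∑ μ ∈ nthRootsFinset (2 * n) (1 : K), F μ =
      ∑ t : ZMod 2 × ZMod n, F ((-1 : K) ^ t.1.val * ω ^ t.2.val) := by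
  classical
  have hinj := injective_neg_one_pow_mul_pow hn hω
  have himage : (Finset.univ : Finset (ZMod 2 × ZMod n)).image
      (fun t => (-1 : K) ^ t.1.val * ω ^ t.2.val) = nthRootsFinset (2 * n) (1 : K) := by
    apply Finset.eq_of_subset_of_card_le
    · simp only [Finset.image_subset_iff, Finset.mem_univ, true_imp_iff]
      intro t
      rw [mem_nthRootsFinset (mul_pos two_pos (NeZero.pos n)), mul_pow, pow_right_comm,
        (even_two_mul n).neg_one_pow, one_pow, one_mul, pow_right_comm, pow_mul' ω,
        hω.pow_eq_one, one_pow, one_pow]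
    · rw [Finset.card_image_of_injective _ hinj,
        (isPrimitiveRoot_neg_of_odd hn hω).card_nthRootsFinset]
      simp [ZMod.card]
  rw [← himage, Finset.sum_image hinj.injOn]

end RootsOfUnity

section CyclicAverage

variable {k A : Type*} [Field k] [Ring A] [Algebra k A] {n : ℕ} {h x g : A}

variable (k) in
/-- The average `(1 / n) ∑ h ^ t` over `0 ≤ t < n`. For `h ^ n = 1` and `n` invertible in `k` it is
the idempotent whose left multiplication projects onto the vectors fixed by `h`. -/
noncomputable def cyclicAverage (n : ℕ) (h : A) : A :=
  (n : k)⁻¹ • ∑ t ∈ Finset.range n, h ^ t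

lemma mul_cyclicAverage (hh : h ^ n = 1) : h * cyclicAverage k n h = cyclicAverage k n h := by
  rw [cyclicAverage, mul_smul_comm, ← sub_eq_zero, ← smul_sub, ← sub_one_mul, mul_geom_sum, hh,
    sub_self, smul_zero]

lemma cyclicAverage_mul (hn : (n : k) ≠ 0) (hx : h * x = x) : cyclicAverage k n h * x = x := by
  have hpow (t : ℕ) : h ^ t * x = x := by
    induction t with
    | zero => rw [pow_zero, one_mul]
    | succ t ih => rw [pow_succ, mul_assoc, hx, ih]
  simp [cyclicAverage, Finset.sum_mul, hpow, ← Nat.cast_smul_eq_nsmul k, hn]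

lemma isIdempotentElem_cyclicAverage (hn : (n : k) ≠ 0) (hh : h ^ n = 1) :
    IsIdempotentElem (cyclicAverage k n h) :=
  cyclicAverage_mul hn (mul_cyclicAverage hh)

lemma eigenspace_mulLeft_cyclicAverage (hn : (n : k) ≠ 0) (hg : g ^ n = 1) {c : k} (hc0 : c ≠ 0)
    (hc : c ^ n = 1) :
    Module.End.eigenspace (LinearMap.mulLeft k (cyclicAverage k n (c⁻¹ • g)) : Module.End k A) 1 =
      Module.End.eigenspace (LinearMap.mulLeft k g : Module.End k A) c := by
  have hh : (c⁻¹ • g) ^ n = 1 := by rw [smul_pow, inv_pow, hc, hg, inv_one, one_smul]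
  ext x
  have hfix : g * x = c • x ↔ c⁻¹ • g * x = x := by
    rw [smul_mul_assoc, inv_smul_eq_iff₀ hc0]
  simp only [Module.End.mem_eigenspace_iff, LinearMap.mulLeft_apply, one_smul, hfix]
  refine ⟨fun hx => ?_, cyclicAverage_mul hn⟩
  rw [← hx, ← mul_assoc, mul_cyclicAverage hh]

end CyclicAverage

lemma pow_zmod_val_add {M : Type*} [Monoid M] {x : M} {n : ℕ} [NeZero n] (hx : x ^ n = 1)
    (i j : ZMod n) : x ^ (i + j).val = x ^ i.val * x ^ j.val := by
  rw [ZMod.val_add, ← pow_eq_pow_mod _ hx, pow_add]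

lemma commute_mulLeft_antipode_sq {R H : Type*} [CommSemiring R] [Semiring H] [HopfAlgebra R H]
    {x : H} (hx : antipode R (antipode R x) = x) :
    Commute (LinearMap.mulLeft R x : Module.End R H) ((antipode R : Module.End R H) ^ 2) := by
  ext y
  simp [pow_two, antipode_mul_antidistrib, hx]

section HopfEigenspace

variable {k H : Type*} [Field k] [Ring H] [HopfAlgebra k H] {g : H} {n : ℕ} {ω : k}

lemma IsGroupLike.isGroupLikeElem (hg : IsGroupLike k g) : IsGroupLikeElem k g := by
  refine ⟨?_, hg.2⟩
  have h : counit (R := k) g • g = g := by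
    simpa [hg.2] using congr(TensorProduct.lid k H $(rTensor_counit_comul (R := k) g))
  exact smul_left_injective k hg.1 (h.trans (one_smul k g).symm)

lemma antipode_antipode_cyclicAverage (hg : IsGroupLikeElem k g) (c : k) :
    antipode k (antipode k (cyclicAverage k n (c • g))) = cyclicAverage k n (c • g) := by
  have hpow (t : ℕ) : antipode k (antipode k (g ^ t)) = g ^ t := (hg.pow).antipode_antipode
  simp [cyclicAverage, smul_pow, hpow]

/-- Radford's formula turns the condition `u * g = ω ^ (l - 2 i) • u` on an eigenvector of `S²` into
one, `g * u = ω ^ l • u`, that does not depend on `i`. -/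
lemma hopfEigenspace_eq_inf_eigenspace_mulLeft [NeZero n] (hω : ω ^ n = 1)
    (hRadford : ∀ x, ((antipode k : Module.End k H) ^ 4) x * g = g * x) (a : ZMod 2)
    (i l : ZMod n) :
    hopfEigenspace g ω (a, i, l - 2 * i) =
      Module.End.eigenspace ((antipode k : Module.End k H) ^ 2) ((-1) ^ a.val * ω ^ i.val) ⊓
        Module.End.eigenspace (LinearMap.mulLeft k g : Module.End k H) (ω ^ l.val) := by
  have hω0 : ω ≠ 0 := (IsUnit.of_pow_eq_one hω (NeZero.ne n)).ne_zero
  have hl : ω ^ l.val = ω ^ (l - 2 * i).val * (ω ^ i.val) ^ 2 := by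
    conv_lhs => rw [show l = l - 2 * i + (i + i) by ring]
    rw [pow_zmod_val_add hω, pow_zmod_val_add hω, sq]
  ext u
  simp only [hopfEigenspace, Submodule.mem_inf, Module.End.mem_eigenspace_iff]
  refine and_congr_right fun hu => ?_
  have hu4 : ((antipode k : Module.End k H) ^ 4) u = (ω ^ i.val) ^ 2 • u := by
    rw [show 4 = 2 + 2 from rfl, pow_add, Module.End.mul_apply, hu, map_smul, hu, smul_smul, ← sq,
      mul_pow, pow_right_comm, neg_one_sq, one_pow, one_mul]
  have hgu : g * u = (ω ^ i.val) ^ 2 • (u * g) := by rw [← hRadford, hu4, smul_mul_assoc]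
  rw [LinearMap.mulRight_apply, LinearMap.mulLeft_apply, hgu, hl, mul_comm _ (_ ^ 2), mul_smul,
    smul_right_inj (pow_ne_zero 2 (pow_ne_zero _ hω0))]

end HopfEigenspace

section TraceFormula

variable {k H : Type*} [Field k] [Ring H] [HopfAlgebra k H] [FiniteDimensional k H]
  {g : H} {n : ℕ} {ω : k}

lemma trace_mulLeft_mul_antipode_sq_pow_eq_zero [NeZero n] {l : Module.Dual k H} {L : H}
    (hl : IsRightIntegralDual k l) (hL : IsLeftIntegral k L) (hlL : l L ≠ 0)
    (hεL : counit (R := k) L = 0)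
    (hS : (antipode k : Module.End k H) ^ (4 * n) = 1) (a : H) :
    LinearMap.trace k H
      (LinearMap.mulLeft k a * ((antipode k : Module.End k H) ^ 2) ^ (2 * n - 1)) = 0 := by
  have hn := NeZero.pos n
  have hTS : (antipode k : Module.End k H) ^ (4 * n - 1) * antipode k = 1 := by
    rw [pow_sub_one_mul (by lia), hS]
  have hT : ((antipode k : Module.End k H) ^ 2) ^ (2 * n - 1) =
      ((antipode k : Module.End k H) ^ (4 * n - 1)) ^ 2 := by
    rw [← pow_mul, ← pow_mul, show (4 * n - 1) * 2 = 4 * n + 2 * (2 * n - 1) by lia, pow_add, hS,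
      one_mul]
  apply mul_left_cancel₀ hlL
  rw [hT, trace_mulLeft_mul_antipodeInv_sq hl hL hTS, hεL, zero_mul, mul_zero]

lemma trace_mulLeft_cyclicAverage_mul_antipode_sq_pow [NeZero (2 : k)] [NeZero n] (hn : Odd n)
    (hω : IsPrimitiveRoot ω n) (hg : IsGroupLikeElem k g) (hgn : g ^ n = 1)
    (hS : (antipode k : Module.End k H) ^ (4 * n) = 1)
    (hRadford : ∀ x, ((antipode k : Module.End k H) ^ 4) x * g = g * x) (l : ZMod n) :
    LinearMap.trace k H (LinearMap.mulLeft k (cyclicAverage k n ((ω ^ l.val)⁻¹ • g)) *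
        ((antipode k : Module.End k H) ^ 2) ^ (2 * n - 1)) =
      ∑ t : ZMod 2 × ZMod n, (-1 : k) ^ t.1.val * (ω ^ t.2.val)⁻¹ *
        (Module.finrank k (hopfEigenspace g ω (t.1, t.2, l - 2 * t.2)) : k) := by
  have hn0 : (n : k) ≠ 0 := hω.neZero'.out
  have hc : (ω ^ l.val) ^ n = 1 := by rw [pow_right_comm, hω.pow_eq_one, one_pow]
  have hc0 : ω ^ l.val ≠ 0 := pow_ne_zero _ (hω.ne_zero (NeZero.ne n))
  have hh : ((ω ^ l.val)⁻¹ • g) ^ n = 1 := by rw [smul_pow, inv_pow, hc, hgn, inv_one, one_smul]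
  have hidem : IsIdempotentElem
      (LinearMap.mulLeft k (cyclicAverage k n ((ω ^ l.val)⁻¹ • g)) : Module.End k H) :=
    (isIdempotentElem_cyclicAverage hn0 hh).map (Algebra.lmul k H)
  have hσ : ((antipode k : Module.End k H) ^ 2) ^ (2 * n) = 1 := by
    rw [← pow_mul, ← mul_assoc]
    exact hS
  rw [trace_mul_pow_pred_of_isIdempotentElem (isPrimitiveRoot_neg_of_odd hn hω) hidem
    (commute_mulLeft_antipode_sq (antipode_antipode_cyclicAverage hg _))
    hσ, sum_nthRootsFinset_two_mul hn hω]
  refine Finset.sum_congr rfl fun t _ => ?_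
  rw [eigenspace_mulLeft_cyclicAverage hn0 hgn hc0 hc,
    hopfEigenspace_eq_inf_eigenspace_mulLeft hω.pow_eq_one hRadford, mul_inv, ← inv_pow,
    inv_neg_one]

end TraceFormula

theorem stmt14_general {k H : Type*} [Field k] [NeZero (2 : k)] [Ring H] [HopfAlgebra k H]
    (hss : ¬ IsSemisimpleRing H)
    (huni : IsDistinguishedGroupLikeDual k (Bialgebra.counitAlgHom k H)) {g : H}
    (hg : IsDistinguishedGroupLike k g) {n : ℕ} (hn : Odd n) [NeZero n]
    (hS : (antipode k : Module.End k H) ^ (4 * n) = 1) (hgn : g ^ n = 1) {ω : k}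
    (hω : IsPrimitiveRoot ω n) (l : ZMod n) :
    ∑ t : ZMod 2 × ZMod n,
      (-1 : k) ^ t.1.val * (ω ^ t.2.val)⁻¹ *
        (Module.finrank k (hopfEigenspace g ω (t.1, t.2, l - 2 * t.2)) : k) = 0 := by
  obtain ⟨L, hL0, hL, hL'⟩ := huni
  obtain ⟨hgl, lam, hlam0, hlam, hlamg⟩ := hg
  have hlamL : lam L ≠ 0 := dual_integral_apply_ne_zero hlam0 hlam hL0 hL'
  have := finiteDimensional_of_dual_integral_apply_ne_zero hlam hL hlamL
  have hεL : counit (R := k) L = 0 := by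
    by_contra hεL
    exact hss <| isSemisimpleModule_of_counit_ne_zero H hL' hεL
      (antipode_surjective_of_dual_integral_apply_ne_zero hlam hL hlamL)
  have hRadford := antipode_pow_four_mul hgl.isGroupLikeElem hlam hlamg hL hL' hlamL
  rw [← trace_mulLeft_cyclicAverage_mul_antipode_sq_pow hn hω hgl.isGroupLikeElem hgn hS hRadford]
  exact trace_mulLeft_mul_antipode_sq_pow_eq_zero hlam hL hlamL hεL hS _

/-- Lemma 4.4. Let `H` be a non-semisimple unimodular Hopf algebra of odd
index `n` over an algebraically closed field of characteristic `0` and `ω` a primitive `n`-th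
root of unity. Then for every `l ∈ ℤ/n`,
`Σ_{(a,i) ∈ ℤ/2 × ℤ/n} (−1)^a ω^{−i} dim H^ω_{a,i,l−2i} = 0` in `k`,
the index `l − 2i` being computed in `ℤ/n`. -/
theorem stmt14 (k : Type*) [Field k] [IsAlgClosed k] [CharZero k]
    (n : ℕ) (hn : Odd n) [NeZero n]
    (H : Type*) [Ring H] [HopfAlgebra k H] [FiniteDimensional k H]
    (hss : ¬ IsSemisimpleRing H)
    (huni : IsDistinguishedGroupLikeDual k (Bialgebra.counitAlgHom k H))
    (g : H) (hg : IsDistinguishedGroupLike k g) (hidx : IsHopfIndex k g n)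
    (ω : k) (hω : IsPrimitiveRoot ω n) :
    ∀ l : ZMod n,
      ∑ t : ZMod 2 × ZMod n,
        (-1 : k) ^ t.1.val * (ω ^ t.2.val)⁻¹ *
          (Module.finrank k (hopfEigenspace g ω (t.1, t.2, l - 2 * t.2)) : k) = 0 := by
  exact stmt14_general hss huni hg hn hidx.2.1 hidx.2.2.1 hω
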